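/- arXiv:2201.12699 — 2 statements merged into one kernel-verified Lean document; each statement's English description precedes it below -/
import Mathlib

section
/- Let κ ∈ (0,1), let λ = √(1 − κ²), let f : ℝ → ℝ be defined by f(T) = ∫₀^T F(1/4, 3/4; 1/2; κ² sin² t) dt, let φ be the inverse of f, let ψ = arcsin(κ sin φ), and let d = cos ψ. Define p : { u ∈ ℝ : d(u) ≠ 1 } → ℝ by p(u) = −1/3 + (κ²/2)/(1 − d(u)). Then p satisfies the Weierstrass differential equation (p′)² = 4 p³ − (λ² + 1/3) p − (λ²/3 − 1/27) at every point u with d(u) ≠ 1. -/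
/-! The hypergeometric function in the integrand is elementary: the even part of the binomial series
gives `F(1/4, 3/4; 1/2; s²) = ((1 - s)^(-1/2) + (1 + s)^(-1/2)) / 2` (`gaussHyp_sq`), and at
`s = κ sin φ = sin ψ` squaring this yields `F = √((1 + d) / 2) / d` with `d = √(1 - s²) = cos ψ`
(`gaussHyp_sq_eq`). By the fundamental theorem of calculus and the inverse function rule,
`φ' = 1 / F` (`hasDerivAt_of_inverse_integral`), so differentiating `d = √(1 - κ² sin² φ)` gives
`d' ^ 2 = 2 (1 - d) (d² - λ²)`. Substituting this into `p' = (κ² / 2) d' / (1 - d)²` turns the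
Weierstrass equation into an identity of rational functions in `d`. -/

open Real

/-- The Gauss hypergeometric series `F(a, b; c; x)`. -/
noncomputable def gaussHyp (a b c x : ℝ) : ℝ :=
  ∑' n : ℕ, ((ascPochhammer ℝ n).eval a * (ascPochhammer ℝ n).eval b /
    ((ascPochhammer ℝ n).eval c * (n.factorial : ℝ))) * x ^ n

/-- The coefficient of `x ^ (2 * n)` in the expansion of `(1 - x) ^ (-1/2)`, where
`(1/2)_{2n} = 4ⁿ (1/4)_n (3/4)_n` and `(2n)! = 4ⁿ (1/2)_n n!`. -/
lemma choose_even_eq (n : ℕ) :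
    Ring.choose ((1 / 2 : ℝ) + ((2 * n : ℕ) : ℝ) - 1) (2 * n) =
      (ascPochhammer ℝ n).eval (1 / 4) * (ascPochhammer ℝ n).eval (3 / 4) /
        ((ascPochhammer ℝ n).eval (1 / 2) * (n.factorial : ℝ)) := by
  rw [← Ring.multichoose_eq]
  have h := Ring.factorial_nsmul_multichoose_eq_ascPochhammer (1 / 2 : ℝ) (2 * n)
  rw [Polynomial.ascPochhammer_smeval_cast, Polynomial.ascPochhammer_smeval_eq_eval,
    nsmul_eq_mul] at h
  have h1 : ∀ n : ℕ, (ascPochhammer ℝ (2 * n)).eval (1 / 2) =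
      4 ^ n * (ascPochhammer ℝ n).eval (1 / 4) * (ascPochhammer ℝ n).eval (3 / 4) := by
    intro n
    induction n with
    | zero => simp
    | succ k ih =>
      rw [show 2 * (k + 1) = 2 * k + 1 + 1 by ring]
      simp only [ascPochhammer_succ_eval, ih]
      push_cast
      ring
  have h2 : ∀ n : ℕ, ((2 * n).factorial : ℝ) =
      4 ^ n * (ascPochhammer ℝ n).eval (1 / 2) * n.factorial := by
    intro n
    induction n with
    | zero => simp
    | succ k ih =>
      rw [show 2 * (k + 1) = 2 * k + 1 + 1 by ring]
      simp only [ascPochhammer_succ_eval, Nat.factorial_succ]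
      push_cast
      rw [ih]
      ring
  rw [h1, h2] at h
  have h3 : 0 < (ascPochhammer ℝ n).eval (1 / 2 : ℝ) := ascPochhammer_pos n _ (by norm_num)
  have h4 : (0 : ℝ) < n.factorial := by positivity
  have h5 : (0 : ℝ) < 4 ^ n := by positivity
  rw [eq_div_iff (by positivity)]
  apply mul_left_cancel₀ h5.ne'
  linarith

lemma hasSum_one_div_sqrt {x : ℝ} (hx : |x| < 1) :
    HasSum (fun n : ℕ ↦ Ring.choose ((1 / 2 : ℝ) + (n : ℝ) - 1) n * x ^ n) (1 / √(1 - x)) := by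
  have h := (Real.one_div_one_sub_rpow_hasFPowerSeriesOnBall_zero (1 / 2)).hasSum
    (y := x) (by simpa [← ofReal_norm] using hx)
  simpa [Real.sqrt_eq_rpow, FormalMultilinearSeries.ofScalars, mul_comm] using h

lemma gaussHyp_sq {s : ℝ} (hs : |s| < 1) :
    gaussHyp (1 / 4) (3 / 4) (1 / 2) (s ^ 2) = (1 / √(1 - s) + 1 / √(1 + s)) / 2 := by
  have h1 := hasSum_one_div_sqrt hs
  have h2 := hasSum_one_div_sqrt (x := -s) (by rwa [abs_neg])
  have h := (h1.add h2).div_const 2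
  rw [sub_neg_eq_add] at h
  -- the odd terms cancel
  have hinj : Function.Injective (fun n : ℕ ↦ 2 * n) := fun a b hab ↦ by simpa using hab
  rw [← hinj.hasSum_iff] at h
  · rw [← h.tsum_eq, gaussHyp]
    congr 1
    ext n
    simp only [Function.comp_apply]
    rw [choose_even_eq, (even_two_mul n).neg_pow, ← pow_mul]
    ring
  · intro n hn
    have hodd : Odd n := by
      rw [← Nat.not_even_iff_odd]
      rintro ⟨k, rfl⟩
      exact hn ⟨k, by simp; ring⟩
    rw [hodd.neg_pow]
    ring

lemma gaussHyp_sq_eq {s : ℝ} (hs : |s| < 1) :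
    gaussHyp (1 / 4) (3 / 4) (1 / 2) (s ^ 2) = √((1 + √(1 - s ^ 2)) / 2) / √(1 - s ^ 2) := by
  obtain ⟨hs1, hs2⟩ := abs_lt.mp hs
  have ha : 0 < √(1 - s) := Real.sqrt_pos.mpr (by linarith)
  have hb : 0 < √(1 + s) := Real.sqrt_pos.mpr (by linarith)
  have ha2 := Real.sq_sqrt (show (0 : ℝ) ≤ 1 - s by linarith)
  have hb2 := Real.sq_sqrt (show (0 : ℝ) ≤ 1 + s by linarith)
  have hab : √(1 - s ^ 2) = √(1 - s) * √(1 + s) := by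
    rw [← Real.sqrt_mul (by linarith)]
    ring_nf
  have hsum : √((1 + √(1 - s ^ 2)) / 2) = (√(1 - s) + √(1 + s)) / 2 := by
    rw [Real.sqrt_eq_iff_mul_self_eq (by positivity) (by positivity), hab]
    linarith
  rw [gaussHyp_sq hs, hsum, hab]
  field_simp
  ring

/-- The inverse `φ` of a primitive of a positive continuous function `g` satisfies `φ' = 1 / g ∘ φ`;
its continuity comes from the primitive being an order isomorphism of `ℝ`. -/
lemma hasDerivAt_of_inverse_integral {f g φ : ℝ → ℝ} (hg : Continuous g) (hpos : ∀ t, 0 < g t)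
    (hf : ∀ T, f T = ∫ t in (0 : ℝ)..T, g t) (hfφ : Function.RightInverse φ f) (u : ℝ) :
    HasDerivAt φ (g (φ u))⁻¹ u := by
  have hderiv : ∀ t, HasDerivAt f (g t) t := fun t ↦ by
    rw [funext hf]
    exact hg.integral_hasStrictDerivAt 0 t |>.hasDerivAt
  have hmono : StrictMono f := strictMono_of_deriv_pos fun t ↦ by
    rw [(hderiv t).deriv]
    exact hpos t
  have hcont : Continuous φ := (hmono.orderIsoOfRightInverse f φ hfφ).symm.continuous
  exact (hderiv (φ u)).of_local_left_inverse hcont.continuousAt (hpos _).ne'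
    (Filter.Eventually.of_forall hfφ)

theorem stmt_6 (κ : ℝ) (hκ : κ ∈ Set.Ioo (0 : ℝ) 1)
    (lam : ℝ) (hlam : lam = Real.sqrt (1 - κ^2))
    (f : ℝ → ℝ)
    (hf : ∀ T : ℝ, f T = ∫ t in (0:ℝ)..T, gaussHyp (1/4) (3/4) (1/2) (κ^2 * Real.sin t ^ 2))
    (φ : ℝ → ℝ) (hφf : Function.LeftInverse φ f) (hfφ : Function.RightInverse φ f)
    (ψ : ℝ → ℝ) (hψ : ∀ u : ℝ, ψ u = Real.arcsin (κ * Real.sin (φ u)))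
    (d : ℝ → ℝ) (hd : ∀ u : ℝ, d u = Real.cos (ψ u))
    (p : ℝ → ℝ) (hp : ∀ u : ℝ, p u = -(1/3) + (κ^2 / 2) / (1 - d u)) :
    ∀ u : ℝ, d u ≠ 1 →
      (deriv p u)^2 = 4 * (p u)^3 - (lam^2 + 1/3) * p u - (lam^2 / 3 - 1/27) := by
  intro u hu
  obtain ⟨hκ0, hκ1⟩ := hκ
  have hs : ∀ t, |κ * sin t| < 1 := fun t ↦ by
    rw [abs_mul, abs_of_pos hκ0]
    nlinarith [Real.abs_sin_le_one t, abs_nonneg (sin t)]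
  have hpos : ∀ t, 0 < 1 - (κ * sin t) ^ 2 := fun t ↦ by
    linarith [(sq_lt_one_iff_abs_lt_one _).mpr (hs t)]
  have hlam2 : lam ^ 2 = 1 - κ ^ 2 := by
    rw [hlam, Real.sq_sqrt (by nlinarith)]
  have hf' : ∀ T, f T = ∫ t in (0 : ℝ)..T,
      √((1 + √(1 - (κ * sin t) ^ 2)) / 2) / √(1 - (κ * sin t) ^ 2) := fun T ↦ by
    simp only [hf, ← mul_pow, gaussHyp_sq_eq (hs _)]
  have hφ := hasDerivAt_of_inverse_integral (φ := φ)
    (Continuous.div (by fun_prop) (by fun_prop) fun t ↦ (Real.sqrt_pos.mpr (hpos t)).ne')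
    (fun t ↦ div_pos (Real.sqrt_pos.mpr (by positivity)) (Real.sqrt_pos.mpr (hpos t))) hf' hfφ u
  have hdeq : ∀ v, d v = √(1 - (κ * sin (φ v)) ^ 2) := fun v ↦ by
    rw [hd, hψ, Real.cos_arcsin]
  have hd0 : 0 < d u := by
    rw [hdeq]
    exact Real.sqrt_pos.mpr (hpos _)
  have hd2 : d u ^ 2 = 1 - (κ * sin (φ u)) ^ 2 := by
    rw [hdeq, Real.sq_sqrt (hpos _).le]
  have hdd := ((((hφ.sin).const_mul κ).pow 2).const_sub 1).sqrt (hpos _).ne'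
  simp only [Pi.div_apply, Pi.pow_apply, ← hdeq] at hφ hdd
  set w := √((1 + d u) / 2) with hw
  have hw0 : 0 < w := Real.sqrt_pos.mpr (by positivity)
  have hw2 : w ^ 2 = (1 + d u) / 2 := Real.sq_sqrt (by positivity)
  have hd' : HasDerivAt d (-(κ ^ 2 * sin (φ u) * cos (φ u)) / w) u := by
    convert hdd using 1
    · field_simp
      ring
  have hu' : 1 - d u ≠ 0 := sub_ne_zero.mpr hu.symm
  have hp' : HasDerivAt p (κ ^ 2 / 2 * (-(κ ^ 2 * sin (φ u) * cos (φ u)) / w) / (1 - d u) ^ 2) u := by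
    rw [funext hp]
    refine HasDerivAt.congr_deriv
      (((hasDerivAt_const u (κ ^ 2 / 2)).div (hd'.const_sub 1) hu').const_add (-(1 / 3))) ?_
    ring
  have hd'2 : (-(κ ^ 2 * sin (φ u) * cos (φ u)) / w) ^ 2 =
      2 * (1 - d u) * (d u ^ 2 - 1 + κ ^ 2) := by
    rw [div_pow, hw2, div_eq_iff (by positivity)]
    have hnum : (-(κ ^ 2 * sin (φ u) * cos (φ u))) ^ 2 =
        (κ * sin (φ u)) ^ 2 * (κ ^ 2 - (κ * sin (φ u)) ^ 2) := by
      linear_combination κ ^ 4 * sin (φ u) ^ 2 * Real.sin_sq_add_cos_sq (φ u)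
    rw [hnum, show (κ * sin (φ u)) ^ 2 = 1 - d u ^ 2 by linarith]
    ring
  rw [hp'.deriv, div_pow, mul_pow, hd'2, hp u, hlam2]
  field_simp
  ring
end

section
/- For every x with 0 < x < 1, √(1 + x) · F(1/4, 3/4; 1; x²) = F(1/2, 1/2; 1; 2x/(1 + x)), where F denotes the Gauss hypergeometric series. -/
/-!
Both sides are elliptic integrals. Write `p n = (1/2)_n / n!`, so that
`∑ p n * u ^ n = (1 - u) ^ (-1/2)` for `|u| < 1` (binomial series), and recall the Wallis integral
`∫ θ in 0..π, sin θ ^ (2 * n) = π * p n`. Integrating the binomial series term by term gives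

* `π * F(1/2, 1/2; 1; z) = ∫ θ in 0..π, (1 - z * sin θ ^ 2) ^ (-1/2)`, with `u = z * sin θ ^ 2`;
* `π * F(1/4, 3/4; 1; x ^ 2) = ∫ θ in 0..π, (1 + x * cos (2 * θ)) ^ (-1/2)`, with
  `u = -x * cos (2 * θ)`: odd moments of the cosine vanish, even ones are again `π * p m`, and
  `p (2 * m) * p m = (1/4)_m (3/4)_m / m! ^ 2`.

For `z = 2 * x / (1 + x)` one has `1 - z * sin θ ^ 2 = (1 + x * cos (2 * θ)) / (1 + x)`, so the two
integrands differ by the constant factor `√(1 + x)`.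
-/

open Real

/-- The coefficients `(1/2)_n / n!` of the binomial series of `(1 - u) ^ (-1/2)`. -/
noncomputable def halfCoeff (n : ℕ) : ℝ :=
  (ascPochhammer ℝ n).eval (1/2) / (n.factorial : ℝ)

lemma halfCoeff_zero : halfCoeff 0 = 1 := by simp [halfCoeff]

lemma halfCoeff_succ (n : ℕ) :
    halfCoeff (n + 1) = halfCoeff n * ((n + 1/2) / (n + 1)) := by
  have h : (n.factorial : ℝ) ≠ 0 := by positivity
  have h' : (n : ℝ) + 1 ≠ 0 := by positivity
  rw [halfCoeff, halfCoeff, ascPochhammer_succ_eval, Nat.factorial_succ]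
  push_cast
  field_simp
  ring

lemma halfCoeff_nonneg (n : ℕ) : 0 ≤ halfCoeff n := by
  induction n with
  | zero => simp [halfCoeff_zero]
  | succ n ih => rw [halfCoeff_succ]; positivity

/-- The coefficients of `F(1/4, 3/4; 1; ·)`; by induction, both sides having the same ratio
`(m + 1/4) * (m + 3/4) / (m + 1) ^ 2` of consecutive terms. -/
lemma halfCoeff_two_mul_mul (m : ℕ) :
    halfCoeff (2 * m) * halfCoeff m =
      (ascPochhammer ℝ m).eval (1/4) * (ascPochhammer ℝ m).eval (3/4) /
        ((ascPochhammer ℝ m).eval 1 * (m.factorial : ℝ)) := by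
  induction m with
  | zero => simp [halfCoeff_zero]
  | succ m ih =>
    have h : (m.factorial : ℝ) ≠ 0 := by positivity
    have h' : (m : ℝ) + 1 ≠ 0 := by positivity
    have h2 : 2 * (m : ℝ) + 1 ≠ 0 := by positivity
    have h3 : 2 * (m : ℝ) + 1 + 1 ≠ 0 := by positivity
    have e : halfCoeff (2 * (m + 1)) * halfCoeff (m + 1) =
        (halfCoeff (2 * m) * halfCoeff m) * ((m + 1/4) * (m + 3/4) / (m + 1) ^ 2) := by
      rw [show 2 * (m + 1) = 2 * m + 1 + 1 by ring, halfCoeff_succ, halfCoeff_succ,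
        halfCoeff_succ]
      push_cast
      field_simp
      ring
    rw [e, ih]
    simp only [ascPochhammer_succ_eval, ascPochhammer_eval_one, Nat.factorial_succ]
    push_cast
    field_simp
    ring

lemma choose_eq_halfCoeff (n : ℕ) : Ring.choose ((1/2 : ℝ) + n - 1) n = halfCoeff n := by
  have h : (n.factorial : ℝ) ≠ 0 := by positivity
  have := Ring.factorial_nsmul_multichoose_eq_ascPochhammer (1/2 : ℝ) n
  rw [← Polynomial.eval₂_smulOneHom_eq_smeval, ← Polynomial.eval_map, ascPochhammer_map,
    nsmul_eq_mul] at this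
  rw [halfCoeff, ← this, Ring.choose, show (1/2 : ℝ) + n - 1 - n + 1 = 1/2 by ring]
  field_simp

lemma hasSum_halfCoeff {u : ℝ} (hu : |u| < 1) :
    HasSum (fun n ↦ halfCoeff n * u ^ n) (1 / (1 - u) ^ (1/2 : ℝ)) := by
  have h := (Real.one_div_one_sub_rpow_hasFPowerSeriesOnBall_zero (1/2)).hasSum (y := u)
    (by simpa [← ofReal_norm] using hu)
  simpa only [FormalMultilinearSeries.ofScalars_apply_eq, choose_eq_halfCoeff, smul_eq_mul,
    zero_add] using h

/-- Term-by-term integration of the binomial series, composed with `r * f` where `|f| ≤ 1`. -/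
lemma hasSum_integral_halfCoeff {r : ℝ} (hr : |r| < 1) {f : ℝ → ℝ} (hf : Continuous f)
    (hf1 : ∀ θ, |f θ| ≤ 1) :
    HasSum (fun n ↦ halfCoeff n * r ^ n * ∫ θ in 0..π, f θ ^ n)
      (∫ θ in 0..π, 1 / (1 - r * f θ) ^ (1/2 : ℝ)) := by
  have key := intervalIntegral.hasSum_integral_of_dominated_convergence
    (μ := MeasureTheory.volume) (a := 0) (b := π)
    (F := fun n θ ↦ halfCoeff n * (r * f θ) ^ n)
    (f := fun θ ↦ 1 / (1 - r * f θ) ^ (1/2 : ℝ))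
    (fun n _ ↦ halfCoeff n * |r| ^ n)
    (fun n ↦ (by fun_prop : Continuous _).aestronglyMeasurable) ?_ ?_ ?_ ?_
  · simpa [mul_pow, ← mul_assoc] using key
  · refine fun n ↦ .of_forall fun θ _ ↦ ?_
    rw [Real.norm_eq_abs, abs_mul, abs_of_nonneg (halfCoeff_nonneg n), abs_pow, abs_mul]
    have := halfCoeff_nonneg n
    gcongr
    exact mul_le_of_le_one_right (abs_nonneg r) (hf1 θ)
  · exact .of_forall fun θ _ ↦ (hasSum_halfCoeff (by simpa using hr)).summable
  · exact intervalIntegrable_const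
  · refine .of_forall fun θ _ ↦ hasSum_halfCoeff ?_
    rw [abs_mul]
    exact (mul_le_of_le_one_right (abs_nonneg r) (hf1 θ)).trans_lt hr

lemma integral_sin_pow_two_mul (n : ℕ) : ∫ θ in 0..π, sin θ ^ (2 * n) = π * halfCoeff n := by
  rw [integral_sin_pow_even]
  congr 1
  induction n with
  | zero => simp [halfCoeff_zero]
  | succ n ih =>
    have h' : (n : ℝ) + 1 ≠ 0 := by positivity
    rw [Finset.prod_range_succ, ih, halfCoeff_succ]
    field_simp

/-- The moments of `cos (2 * θ)` over a half-turn, reduced to those of the sine: rescale, shift by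
a quarter-turn using periodicity, and fold `[π, 2π]` onto `[0, π]`. -/
lemma integral_cos_two_mul_pow (n : ℕ) :
    ∫ θ in 0..π, cos (2 * θ) ^ n = (1 + (-1) ^ n) / 2 * ∫ θ in 0..π, sin θ ^ n := by
  have hc : Continuous fun θ ↦ sin θ ^ n := by fun_prop
  have hper : Function.Periodic (fun θ ↦ sin θ ^ n) (2 * π) := fun θ ↦ by simp
  have h1 : ∫ θ in 0..π, cos (2 * θ) ^ n = 1/2 * ∫ θ in 0..2 * π, cos θ ^ n := by
    rw [intervalIntegral.integral_comp_mul_left (fun θ ↦ cos θ ^ n) two_ne_zero]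
    simp
  have h2 : ∫ θ in 0..2 * π, cos θ ^ n = ∫ θ in 0..2 * π, sin θ ^ n := by
    simp_rw [← sin_add_pi_div_two]
    rw [intervalIntegral.integral_comp_add_right (fun θ ↦ sin θ ^ n)]
    have := hper.intervalIntegral_add_eq (π / 2) 0
    rw [zero_add] at this ⊢
    rw [add_comm, this]
  have h3 : ∫ θ in π..2 * π, sin θ ^ n = (-1) ^ n * ∫ θ in 0..π, sin θ ^ n := by
    have := intervalIntegral.integral_comp_add_right (a := 0) (b := π) (fun θ ↦ sin θ ^ n) π
    rw [zero_add, ← two_mul] at this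
    rw [← this, ← intervalIntegral.integral_const_mul]
    congr 1
    ext θ
    rw [sin_add_pi, neg_pow]
  rw [h1, h2, ← intervalIntegral.integral_add_adjacent_intervals
    (hc.intervalIntegrable 0 π) (hc.intervalIntegrable π (2 * π)), h3]
  ring

lemma pi_mul_gaussHyp_half {z : ℝ} (hz : |z| < 1) :
    π * gaussHyp (1/2) (1/2) 1 z = ∫ θ in 0..π, 1 / (1 - z * sin θ ^ 2) ^ (1/2 : ℝ) := by
  have h := hasSum_integral_halfCoeff hz (f := fun θ ↦ sin θ ^ 2) (by fun_prop)
    (fun θ ↦ by rw [abs_of_nonneg (sq_nonneg _)]; exact sin_sq_le_one θ)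
  rw [← h.tsum_eq, gaussHyp, ← tsum_mul_left]
  refine tsum_congr fun n ↦ ?_
  simp_rw [← pow_mul]
  rw [integral_sin_pow_two_mul, ascPochhammer_eval_one, halfCoeff]
  ring

lemma pi_mul_gaussHyp_quarter {x : ℝ} (hx : |x| < 1) :
    π * gaussHyp (1/4) (3/4) 1 (x ^ 2) =
      ∫ θ in 0..π, 1 / (1 + x * cos (2 * θ)) ^ (1/2 : ℝ) := by
  have h := hasSum_integral_halfCoeff (r := -x) (by simpa using hx)
    (f := fun θ ↦ cos (2 * θ)) (by fun_prop) (fun θ ↦ abs_cos_le_one _)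
  have hinj : Function.Injective fun m : ℕ ↦ 2 * m := fun a b hab ↦ by simpa using hab
  rw [← hinj.hasSum_iff] at h
  · simp only [neg_mul, sub_neg_eq_add] at h
    rw [← h.tsum_eq, gaussHyp, ← tsum_mul_left]
    refine tsum_congr fun m ↦ ?_
    simp only [Function.comp_apply]
    rw [integral_cos_two_mul_pow, integral_sin_pow_two_mul, ← halfCoeff_two_mul_mul,
      pow_mul (-x), pow_mul (-1 : ℝ)]
    simp
    ring
  · intro n hn
    have hodd : Odd n := by
      rw [← Nat.not_even_iff_odd]
      rintro ⟨m, rfl⟩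
      exact hn ⟨m, two_mul m⟩
    simp [integral_cos_two_mul_pow, hodd.neg_one_pow]

theorem stmt_15 (x : ℝ) (hx : 0 < x) (hx1 : x < 1) :
    Real.sqrt (1 + x) * gaussHyp (1/4) (3/4) 1 (x^2) =
      gaussHyp (1/2) (1/2) 1 (2 * x / (1 + x)) := by
  have hx0 : 0 < 1 + x := by linarith
  have hz : |2 * x / (1 + x)| < 1 := by
    rw [abs_of_pos (by positivity), div_lt_one hx0]
    linarith
  apply mul_left_cancel₀ pi_ne_zero
  rw [pi_mul_gaussHyp_half hz, mul_left_comm,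
    pi_mul_gaussHyp_quarter (by rwa [abs_of_pos hx]), ← intervalIntegral.integral_const_mul]
  congr 1
  ext θ
  have hpos : 0 ≤ 1 + x * cos (2 * θ) := by nlinarith [neg_one_le_cos (2 * θ)]
  have e : 1 - 2 * x / (1 + x) * sin θ ^ 2 = (1 + x * cos (2 * θ)) / (1 + x) := by
    rw [cos_two_mul, cos_sq']
    field_simp
    ring
  rw [e, ← sqrt_eq_rpow, ← sqrt_eq_rpow, sqrt_div hpos, one_div_div, mul_one_div]
end
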